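/- High-frequency behavior of the substructured iteration matrix entries: Let q₁, q₂, q₃ > 0 be Robin parameters and δ > 0. Define for k ∈ ℝ, with λ = λ(k), the denominator D(k) := (λ+q₁)(λ+q₃)e^{λ(L+δ)} − (λ−q₁)(λ−q₃)e^{−λ(L+δ)}, and α(k) := ((λ+q₁)(λ+q₂)e^{λδ} − (λ−q₁)(λ−q₂)e^{−λδ})/D(k), β(k) := ((λ+q₂)(λ−q₃)e^{−λL} − (λ−q₂)(λ+q₃)e^{λL})/D(k). Then, as k → ∞, α(k) → 0 and β(k) · (λ(k)+q₁) e^{λ(k)δ} / (λ(k)−q₂) → −1 (i.e. β(k) is asymptotically equivalent to −((λ(k)−q₂)/(λ(k)+q₁)) e^{−λ(k)δ}). -/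

import Mathlib

open Complex Real Filter

/-- The complex square root with positive real part of `k² + η - iε`. -/
noncomputable def lam (η ε k : ℝ) : ℂ :=
  (((k ^ 2 + η : ℝ) : ℂ) - (ε : ℂ) * Complex.I) ^ ((1 : ℂ) / 2)

/-- Denominator `D(k)`. -/
noncomputable def Dden (η ε L δ q₁ q₃ : ℝ) (k : ℝ) : ℂ :=
  let l := lam η ε k
  (l + (q₁ : ℂ)) * (l + (q₃ : ℂ)) * Complex.exp (l * ((L : ℂ) + (δ : ℂ)))
    - (l - (q₁ : ℂ)) * (l - (q₃ : ℂ)) * Complex.exp (-(l * ((L : ℂ) + (δ : ℂ))))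

/-- Numerator coefficient `α(k)`. -/
noncomputable def alphaHF (η ε L δ q₁ q₂ q₃ : ℝ) (k : ℝ) : ℂ :=
  let l := lam η ε k
  ((l + (q₁ : ℂ)) * (l + (q₂ : ℂ)) * Complex.exp (l * (δ : ℂ))
    - (l - (q₁ : ℂ)) * (l - (q₂ : ℂ)) * Complex.exp (-(l * (δ : ℂ))))
    / Dden η ε L δ q₁ q₃ k

/-- Coefficient `β(k)`. -/
noncomputable def betaHF (η ε L δ q₁ q₂ q₃ : ℝ) (k : ℝ) : ℂ :=
  let l := lam η ε k
  ((l + (q₂ : ℂ)) * (l - (q₃ : ℂ)) * Complex.exp (-(l * (L : ℂ)))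
    - (l - (q₂ : ℂ)) * (l + (q₃ : ℂ)) * Complex.exp (l * (L : ℂ)))
    / Dden η ε L δ q₁ q₃ k

/-!
With `N(a, b, c) = (λ + a) (λ + b) e^{λc} - (λ - a) (λ - b) e^{-λc}`, one has
`D = N(q₁, q₃, L + δ)`, `α = N(q₁, q₂, δ) / D` and `β = -N(-q₂, q₃, L) / D`.
As `Re λ → ∞` with `c > 0`, the growing exponential dominates, so `N(a, b, c) ~ λ² e^{λc}`. Hence
`α ~ e^{-λL} → 0` and `β ~ -e^{-λδ}`, the latter being equivalent to
`-((λ - q₂) / (λ + q₁)) e^{-λδ}` since `λ ± q ~ λ`.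
-/

open Asymptotics Topology

theorem comap_re_atTop_le_cobounded : comap re atTop ≤ Bornology.cobounded ℂ := by
  rw [← comap_norm_atTop]
  exact (tendsto_atTop_mono re_le_norm tendsto_comap).le_comap

theorem eventually_ne_zero_comap_re_atTop : ∀ᶠ l : ℂ in comap re atTop, l ≠ 0 :=
  comap_re_atTop_le_cobounded (Bornology.eventually_ne_cobounded 0)

theorem tendsto_exp_neg_mul_comap_re_atTop {c : ℝ} (hc : 0 < c) :
    Tendsto (fun l : ℂ => Complex.exp (-(l * c))) (comap re atTop) (𝓝 0) := by
  rw [Complex.tendsto_exp_nhds_zero_iff]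
  simpa only [neg_re, re_mul_ofReal, Function.comp_def] using
    tendsto_neg_atTop_atBot.comp (tendsto_comap.atTop_mul_const hc)

theorem isEquivalent_add_const_id (a : ℂ) :
    (fun l : ℂ => l + a) ~[comap re atTop] fun l => l :=
  IsEquivalent.refl.add_isLittleO
    ((isLittleO_const_id_cobounded a).mono comap_re_atTop_le_cobounded)

theorem isLittleO_exp_neg_mul_comap_re_atTop {c : ℝ} (hc : 0 < c) :
    (fun l : ℂ => Complex.exp (-(l * c))) =o[comap re atTop] fun l => Complex.exp (l * c) := by
  refine (isLittleO_iff_tendsto fun l h => absurd h (Complex.exp_ne_zero _)).2 ?_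
  refine (tendsto_exp_neg_mul_comap_re_atTop (mul_pos two_pos hc)).congr fun l => ?_
  rw [← Complex.exp_sub]
  congr 1
  push_cast
  ring

/-- The determinant, up to sign, of the Robin problem `u'' = l² u` on `(0, c)`,
`-u' + a u = 0` at `0` and `u' + b u = 0` at `c`, in the basis `e^{lx}`, `e^{-lx}`.
The denominator `D` and, up to sign, the numerators of `α` and `β` are of this form, that of `β`
with `a = -q₂`. -/
noncomputable def robinDet (a b c l : ℂ) : ℂ :=
  (l + a) * (l + b) * Complex.exp (l * c) - (l - a) * (l - b) * Complex.exp (-(l * c))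

theorem robinDet_isEquivalent (a b : ℂ) {c : ℝ} (hc : 0 < c) :
    robinDet a b c ~[comap re atTop] fun l => l * l * Complex.exp (l * c) := by
  have hgrow : (fun l : ℂ => (l + a) * (l + b) * Complex.exp (l * c)) ~[comap re atTop]
      fun l => l * l * Complex.exp (l * c) :=
    ((isEquivalent_add_const_id a).mul (isEquivalent_add_const_id b)).mul .refl
  have hpoly : (fun l : ℂ => (l - a) * (l - b)) ~[comap re atTop] fun l => l * l := by
    simp only [sub_eq_add_neg]
    exact (isEquivalent_add_const_id (-a)).mul (isEquivalent_add_const_id (-b))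
  have hdecay : (fun l : ℂ => (l - a) * (l - b) * Complex.exp (-(l * c))) =o[comap re atTop]
      fun l => l * l * Complex.exp (l * c) :=
    hpoly.isBigO.mul_isLittleO (isLittleO_exp_neg_mul_comap_re_atTop hc)
  exact hgrow.sub_isLittleO hdecay

theorem robinDet_div_isEquivalent (a b a' b' : ℂ) {c d : ℝ} (hc : 0 < c) (hd : 0 < d) :
    (fun l => robinDet a b c l / robinDet a' b' d l) ~[comap re atTop]
      fun l => Complex.exp (l * (c - d)) := by
  refine ((robinDet_isEquivalent a b hc).div (robinDet_isEquivalent a' b' hd)).congr_right ?_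
  filter_upwards [eventually_ne_zero_comap_re_atTop] with l hl
  rw [Pi.div_apply, mul_div_mul_left _ _ (mul_ne_zero hl hl), ← Complex.exp_sub, mul_sub]

theorem alphaHF_eq_robinDet_div (η ε L δ q₁ q₂ q₃ k : ℝ) :
    alphaHF η ε L δ q₁ q₂ q₃ k =
      robinDet q₁ q₂ δ (lam η ε k) / robinDet q₁ q₃ (L + δ) (lam η ε k) :=
  rfl

theorem betaHF_eq_neg_robinDet_div (η ε L δ q₁ q₂ q₃ k : ℝ) :
    betaHF η ε L δ q₁ q₂ q₃ k =
      -robinDet (-q₂) q₃ L (lam η ε k) / robinDet q₁ q₃ (L + δ) (lam η ε k) := by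
  simp only [betaHF, Dden, robinDet, neg_sub, sub_neg_eq_add, ← sub_eq_add_neg]

theorem high_frequency_entries_general {L δ : ℝ} (hL : 0 < L) (hδ : 0 < δ) (q₁ q₂ q₃ : ℂ) :
    Tendsto (fun l => robinDet q₁ q₂ δ l / robinDet q₁ q₃ (L + δ) l)
      (comap re atTop) (𝓝 0) ∧
    Tendsto (fun l => -robinDet (-q₂) q₃ L l / robinDet q₁ q₃ (L + δ) l
      * (l + q₁) * Complex.exp (l * δ) / (l - q₂)) (comap re atTop) (𝓝 (-1)) := by
  have hLδ : 0 < L + δ := add_pos hL hδ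
  constructor
  · have hα : (fun l => robinDet q₁ q₂ δ l / robinDet q₁ q₃ (L + δ) l) ~[comap re atTop]
        fun l => Complex.exp (-(l * L)) := by
      simpa only [ofReal_add, sub_add_cancel_right, mul_neg] using
        robinDet_div_isEquivalent q₁ q₂ q₁ q₃ hδ hLδ
    exact hα.symm.tendsto_nhds (tendsto_exp_neg_mul_comap_re_atTop hL)
  · have hβ : (fun l => -robinDet (-q₂) q₃ L l / robinDet q₁ q₃ (L + δ) l) ~[comap re atTop]
        fun l => -Complex.exp (-(l * δ)) := by
      simpa only [ofReal_add, sub_add_cancel_left, mul_neg, neg_div] using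
        (robinDet_div_isEquivalent (-q₂) q₃ q₁ q₃ hL hLδ).neg
    have hratio : (fun l => -robinDet (-q₂) q₃ L l / robinDet q₁ q₃ (L + δ) l
        * (l + q₁) * Complex.exp (l * δ) / (l - q₂)) ~[comap re atTop]
        fun l => -Complex.exp (-(l * δ)) * l * Complex.exp (l * δ) / l := by
      simp only [sub_eq_add_neg]
      exact ((hβ.mul (isEquivalent_add_const_id q₁)).mul .refl).div
        (isEquivalent_add_const_id (-q₂))
    have hone : (fun l : ℂ => -Complex.exp (-(l * δ)) * l * Complex.exp (l * δ) / l)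
        =ᶠ[comap re atTop] fun _ => -1 := by
      filter_upwards [eventually_ne_zero_comap_re_atTop] with l hl
      rw [Complex.exp_neg]
      field_simp
    exact (hratio.trans_eventuallyEq hone).tendsto_const

theorem sqrt_le_lam_re (η ε k : ℝ) : √(k ^ 2 + η) ≤ (lam η ε k).re := by
  rw [lam, one_div, Complex.cpow_inv_two_re]
  set z : ℂ := ((k ^ 2 + η : ℝ) : ℂ) - ε * Complex.I
  have hre : z.re = k ^ 2 + η := by simp [z, -ofReal_add]
  gcongr
  linarith [re_le_norm z]

theorem tendsto_lam_comap_re_atTop (η ε : ℝ) : Tendsto (lam η ε) atTop (comap re atTop) := by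
  refine tendsto_comap_iff.2 (tendsto_atTop_mono (sqrt_le_lam_re η ε) ?_)
  exact Real.tendsto_sqrt_atTop.comp
    (tendsto_atTop_add_const_right _ η (tendsto_pow_atTop two_ne_zero))

/-- High frequency behavior of the substructured iteration matrix entries:
as `k → ∞`, `α(k) → 0` and `β(k) ~ -((λ(k)-q₂)/(λ(k)+q₁)) e^{-λ(k)δ}`. -/
theorem high_frequency_entries
    (η ε L δ q₁ q₂ q₃ : ℝ) (hη : 0 < η) (hε : 0 < ε) (hL : 0 < L) (hδ : 0 < δ)
    (hq₁ : 0 < q₁) (hq₂ : 0 < q₂) (hq₃ : 0 < q₃) :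
    Tendsto (fun k : ℝ => alphaHF η ε L δ q₁ q₂ q₃ k) atTop (nhds 0) ∧
    Tendsto (fun k : ℝ => betaHF η ε L δ q₁ q₂ q₃ k
        * (lam η ε k + (q₁ : ℂ)) * Complex.exp (lam η ε k * (δ : ℂ))
        / (lam η ε k - (q₂ : ℂ))) atTop (nhds (-1)) := by
  simp only [alphaHF_eq_robinDet_div, betaHF_eq_neg_robinDet_div]
  exact (high_frequency_entries_general hL hδ q₁ q₂ q₃).imp
    (·.comp (tendsto_lam_comap_re_atTop η ε)) (·.comp (tendsto_lam_comap_re_atTop η ε))
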